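/- For every finite graph G and every vertex v of G, there is a linear clique-width expression constructing G that uses at most lcw(G) + 1 labels and whose first operation is the introduction of the vertex v. -/

import Mathlib

/-!
Take an optimal expression for `G`, with `k = lcw G` labels, and add one fresh label. Introduce `v`
first, with the fresh label, and then run the optimal expression; no join or relabel operation
mentions the fresh label, so `v` stays isolated and keeps it until the optimal expression introduces
`v` with some label `c`. That operation is replaced by relabeling the fresh label to `c`, after
which both constructions agree. `LCWStep.withEarly` is this step-by-step simulation.

As `lcw` is an infimum over `ℕ`, which is `0` on the empty set, it is also needed that some
expression for `G` exists (`exists_lcwLE`): give every vertex its own label and join edge by edge.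
-/

open scoped Classical

/-! ### Linear clique-width -/

/-- A configuration reached while building a graph by a linear clique-width expression:
the set of vertices introduced so far, the adjacency relation created so far, and the
current labeling of the vertices by labels from `Fin k`. -/
structure LCWConfig (V : Type) (k : ℕ) where
  verts : Set V
  adj : V → V → Prop
  lab : V → Fin k

/-- A single operation of a linear clique-width expression with `k` labels:
introduce a new vertex with some label, join all vertices labeled `i` to all vertices
labeled `j` (for `i ≠ j`), or relabel every vertex labeled `i` to `j` (for `i ≠ j`). -/
inductive LCWStep {V : Type} {k : ℕ} : LCWConfig V k → LCWConfig V k → Prop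
  | intro (C : LCWConfig V k) (v : V) (hv : v ∉ C.verts) (c : Fin k) :
      LCWStep C ⟨insert v C.verts, C.adj, fun x => if x = v then c else C.lab x⟩
  | join (C : LCWConfig V k) (i j : Fin k) (hij : i ≠ j) :
      LCWStep C ⟨C.verts, fun x y => C.adj x y ∨
        (x ∈ C.verts ∧ y ∈ C.verts ∧
          ((C.lab x = i ∧ C.lab y = j) ∨ (C.lab x = j ∧ C.lab y = i))), C.lab⟩
  | relabel (C : LCWConfig V k) (i j : Fin k) (hij : i ≠ j) :
      LCWStep C ⟨C.verts, C.adj, fun x => if C.lab x = i then j else C.lab x⟩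

/-- `lcwLE G k` means that the graph `G` can be constructed by a linear clique-width
expression using (at most) `k` labels. -/
def lcwLE {V : Type} (G : SimpleGraph V) (k : ℕ) : Prop :=
  ∃ ℓ₀ ℓ : V → Fin k,
    Relation.ReflTransGen LCWStep
      (⟨∅, fun _ _ => False, ℓ₀⟩ : LCWConfig V k) ⟨Set.univ, G.Adj, ℓ⟩

/-- The linear clique-width of a graph `G`: the least number of labels needed to
construct `G` by a linear clique-width expression. -/
noncomputable def lcw {V : Type} (G : SimpleGraph V) : ℕ :=
  sInf {k | lcwLE G k}

/-! ### Modules, prime graphs, inflations -/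

/-- A module of a graph: every vertex outside `M` is adjacent to all of `M` or to none of it. -/
def IsModule {V : Type} (G : SimpleGraph V) (M : Set V) : Prop :=
  ∀ u ∈ M, ∀ v ∈ M, ∀ w ∉ M, (G.Adj w u ↔ G.Adj w v)

/-- A graph on at least two vertices is prime if all of its modules are trivial
(empty, singletons, or the whole vertex set). -/
def IsPrime {V : Type} (G : SimpleGraph V) : Prop :=
  2 ≤ Nat.card V ∧ ∀ M : Set V, IsModule G M → M.Subsingleton ∨ M = Set.univ

/-- `IsInflation G H φ` says that `G` is an inflation of `H`, where `φ` maps each vertex of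
`G` to the vertex of `H` whose module (namely the induced subgraph of `G` on the fiber
`φ ⁻¹ {v}`) contains it: fibers are nonempty, and for vertices in distinct fibers,
adjacency in `G` is equivalent to adjacency of the fibers' images in `H`. -/
def IsInflation {V ι : Type} (G : SimpleGraph V) (H : SimpleGraph ι) (φ : V → ι) : Prop :=
  Function.Surjective φ ∧
    ∀ x y : V, φ x ≠ φ y → (G.Adj x y ↔ H.Adj (φ x) (φ y))

/-! ### Join, quasi-threshold graphs, universal quasi-threshold graphs -/

/-- The join of two graphs: their disjoint union together with all edges between the parts. -/
def GJoin {α β : Type} (G : SimpleGraph α) (H : SimpleGraph β) : SimpleGraph (α ⊕ β) :=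
  (Gᶜ ⊕g Hᶜ)ᶜ

/-- Quasi-threshold graphs: those constructible (up to isomorphism) from `K₁` by repeatedly
taking joins with `K₁` and disjoint unions with other quasi-threshold graphs. -/
inductive IsQT : ∀ {V : Type}, SimpleGraph V → Prop
  | single : IsQT (⊥ : SimpleGraph (Fin 1))
  | joinK1 {V : Type} {G : SimpleGraph V} :
      IsQT G → IsQT (GJoin (⊥ : SimpleGraph (Fin 1)) G)
  | union {V W : Type} {G : SimpleGraph V} {H : SimpleGraph W} :
      IsQT G → IsQT H → IsQT (G ⊕g H)
  | iso {V W : Type} {G : SimpleGraph V} {H : SimpleGraph W} :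
      IsQT G → Nonempty (G ≃g H) → IsQT H

/-- Vertex set of the universal quasi-threshold graph `Q_{n+1}`. -/
def QVert : ℕ → Type
  | 0 => Fin 1
  | n + 1 => ((Fin 1) ⊕ QVert n) ⊕ QVert n

/-- The universal quasi-threshold graphs, indexed so that `QGraph (t - 1)` is `Q_t`:
`Q_1 = K_1` and `Q_{t} = (K_1 ∗ Q_{t-1}) ⊎ Q_{t-1}` for `t ≥ 2`. -/
def QGraph : (n : ℕ) → SimpleGraph (QVert n)
  | 0 => ⊥
  | n + 1 => (GJoin (⊥ : SimpleGraph (Fin 1)) (QGraph n)) ⊕g (QGraph n)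

/-! ### Hereditary classes of graphs -/

/-- A hereditary class of finite graphs, represented by the set of its members on the
vertex sets `Fin n`: it is closed under isomorphism and induced subgraphs, which together
amount to closure under induced-subgraph embeddings. -/
def Hereditary (C : ∀ n : ℕ, Set (SimpleGraph (Fin n))) : Prop :=
  ∀ {m n : ℕ} (H : SimpleGraph (Fin m)) (G : SimpleGraph (Fin n)),
    Nonempty (H ↪g G) → G ∈ C n → H ∈ C m

/-- The configuration with one more label in which `v` is already present: as long as `C` has not
introduced `v`, the vertex `v` carries the fresh label `Fin.last k`. -/
noncomputable def LCWConfig.withEarly {V : Type} {k : ℕ} (v : V) (C : LCWConfig V k) :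
    LCWConfig V (k + 1) :=
  ⟨insert v C.verts, C.adj,
    fun x => if x = v ∧ v ∉ C.verts then Fin.last k else (C.lab x).castSucc⟩

theorem LCWStep.withEarly {V : Type} {k : ℕ} (v : V) {C D : LCWConfig V k} (h : LCWStep C D) :
    LCWStep (C.withEarly v) (D.withEarly v) := by
  cases h with
  | intro u hu c =>
    by_cases huv : u = v
    · subst huv
      convert LCWStep.relabel (C.withEarly u) (Fin.last k) c.castSucc
        (Fin.castSucc_lt_last c).ne' using 1
      simp only [LCWConfig.withEarly, LCWConfig.mk.injEq, true_and]
      refine ⟨by simp, ?_⟩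
      funext x
      have := (Fin.castSucc_lt_last (C.lab x)).ne
      by_cases hx : x = u <;> simp [hx, hu, this]
    · convert LCWStep.intro (C.withEarly v) u (by simp [LCWConfig.withEarly, huv, hu])
        c.castSucc using 1
      simp only [LCWConfig.withEarly, LCWConfig.mk.injEq, true_and]
      refine ⟨Set.insert_comm _ _ _, ?_⟩
      funext x
      by_cases hx : x = u
      · simp [hx, huv]
      · simp [hx, Ne.symm huv]
  | join i j hij =>
    convert LCWStep.join (C.withEarly v) i.castSucc j.castSucc (by simpa using hij) using 1
    simp only [LCWConfig.withEarly, LCWConfig.mk.injEq, true_and, and_true]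
    funext x y
    have hi := (Fin.castSucc_lt_last i).ne'
    have hj := (Fin.castSucc_lt_last j).ne'
    by_cases hv : v ∈ C.verts
    · simp [hv]
    · by_cases hx : x = v <;> by_cases hy : y = v <;> simp [hx, hy, hv, hi, hj]
  | relabel i j hij =>
    convert LCWStep.relabel (C.withEarly v) i.castSucc j.castSucc (by simpa using hij) using 1
    simp only [LCWConfig.withEarly, LCWConfig.mk.injEq, true_and]
    funext x
    have hi := (Fin.castSucc_lt_last i).ne'
    by_cases hx : x = v ∧ v ∉ C.verts
    · simp [hx, hi]
    · simp only [hx, if_false, Fin.castSucc_inj]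
      split_ifs <;> rfl

theorem exists_lcwLE {V : Type} [Finite V] (G : SimpleGraph V) : ∃ k, lcwLE G k := by
  obtain ⟨n, ⟨e⟩⟩ := Finite.exists_equiv_fin V
  refine ⟨n, e, e, ?_⟩
  have hverts : ∀ s : Set V, Relation.ReflTransGen LCWStep
      (⟨∅, fun _ _ => False, e⟩ : LCWConfig V n) ⟨s, fun _ _ => False, e⟩ := by
    intro s
    induction s, s.toFinite using Set.Finite.induction_on with
    | empty => exact .refl
    | @insert a s ha _ ih =>
      refine ih.tail ?_
      convert LCWStep.intro (⟨s, fun _ _ => False, e⟩ : LCWConfig V n) a ha (e a) using 2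
      funext x
      by_cases hx : x = a <;> simp [hx]
  have hedges : ∀ E : Set (V × V), (∀ p ∈ E, G.Adj p.1 p.2) → Relation.ReflTransGen LCWStep
      (⟨∅, fun _ _ => False, e⟩ : LCWConfig V n)
      ⟨Set.univ, fun x y => (x, y) ∈ E ∨ (y, x) ∈ E, e⟩ := by
    intro E
    induction E, E.toFinite using Set.Finite.induction_on with
    | empty => simpa using hverts Set.univ
    | @insert a s ha _ ih =>
      intro hE
      refine (ih fun p hp => hE p (Set.mem_insert_of_mem _ hp)).tail ?_
      convert LCWStep.join _ (e a.1) (e a.2)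
        (by simpa using (hE a (Set.mem_insert _ _)).ne) using 2
      funext x y
      simp only [Set.mem_insert_iff, Prod.ext_iff, Set.mem_univ, e.apply_eq_iff_eq, true_and]
      apply propext
      tauto
  have h := hedges {p | G.Adj p.1 p.2} fun _ hp => hp
  simpa [G.adj_comm] using h

/-- For every finite graph `G` and vertex `v`, there is an lcw expression
for `G` using at most `lcw G + 1` labels whose first operation introduces the vertex `v`
(so it continues from the configuration obtained from the empty configuration by
introducing `v` with some label `c`). -/
theorem lcw_expression_starting_at_vertex {V : Type} [Finite V]
    (G : SimpleGraph V) (v : V) :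
    ∃ k : ℕ, k ≤ lcw G + 1 ∧ ∃ (c : Fin k) (ℓ₀ ℓ : V → Fin k),
      Relation.ReflTransGen LCWStep
        (⟨insert v ∅, fun _ _ => False, fun x => if x = v then c else ℓ₀ x⟩ :
          LCWConfig V k)
        ⟨Set.univ, G.Adj, ℓ⟩ := by
  have hmem : lcwLE G (lcw G) := Nat.sInf_mem (exists_lcwLE G)
  obtain ⟨ℓ₀, ℓ, h⟩ := hmem
  refine ⟨lcw G + 1, le_rfl, Fin.last _, fun x => (ℓ₀ x).castSucc, fun x => (ℓ x).castSucc, ?_⟩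
  have h' := h.lift (LCWConfig.withEarly v) fun _ _ => LCWStep.withEarly v
  simpa [Function.onFun, LCWConfig.withEarly] using h'
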